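/- Let Y : [0,∞) × Ω → ℝ^d be a jointly measurable β-self-similar process for some β ∈ ℝ, and let C ⊆ ℝ^d be a Borel set which is a cone, i.e. for every λ > 0 and x ∈ ℝ^d one has x ∈ C if and only if λx ∈ C. Set X_t := 1_{Y_t ∈ C} and X̄_t := t⁻¹ ∫₀ᵗ X_s ds. Then for every t > 0 the pair (X_t, X̄_t) has the same joint distribution as (X_1, X̄_1), and consequently P(Y_1 ∈ C | σ(X̄_1)) = X̄_1 almost surely. -/

import Mathlib

open MeasureTheory ProbabilityTheory

/-!
By Fubini, the `n`-th moment of `∫ Z_t dτ(t)` is the integral over `n`-tuples of times of the mixed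
moments of `Z`. Moments determine a bounded law, so the law of the time integral of a bounded
process depends only on the finite-dimensional distributions of the process.

A degree-`0` homogeneous function of a self-similar process is `0`-self-similar. For such an `X`
and `t > 0` one has `(X_t, X̄_t) = ∫₀¹ (X_t, X_{tu}) du`, so the law of this pair does not depend
on `t`.

Put `A_t = ∫₀ᵗ X_s ds = t X̄_t`. Integrating `d/dt A_t^{n+1} = (n+1) X_t A_t^n` over `[0, 1]` and
taking expectations, with `E[X_t A_t^n] = t^n E[X_1 X̄_1^n]`, gives `E[X̄_1^{n+1}] = E[X_1 X̄_1^n]`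
for all `n`. As `X̄_1` is bounded, these identities say that `X̄_1` is the conditional expectation
of `X_1` given `X̄_1`.
-/

open Filter Set
open scoped NNReal Topology unitInterval

section Moments

variable {Ω Ω' : Type*} [MeasurableSpace Ω] [MeasurableSpace Ω'] {μ : Measure Ω} {ν : Measure Ω'}
  {X : Ω → ℝ} {Y : Ω' → ℝ} {M : ℝ}

theorem zero_mem_interior_integrableExpSet_of_ae_bound [IsFiniteMeasure μ]
    (hX : AEMeasurable X μ) (hM : ∀ᵐ ω ∂μ, |X ω| ≤ M) :
    0 ∈ interior (integrableExpSet X μ) := by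
  have huniv : integrableExpSet X μ = univ := eq_univ_of_forall fun _ =>
    integrable_exp_mul_of_mem_Icc hX (hM.mono fun _ => abs_le.mp)
  simp [huniv]

theorem complexMGF_eventuallyEq_of_forall_integral_pow_eq
    (hX : 0 ∈ interior (integrableExpSet X μ)) (hY : 0 ∈ interior (integrableExpSet Y ν))
    (h : ∀ n : ℕ, ∫ ω, X ω ^ n ∂μ = ∫ ω, Y ω ^ n ∂ν) :
    complexMGF X μ =ᶠ[𝓝 0] complexMGF Y ν := by
  have hderiv : ∀ n, iteratedDeriv n (complexMGF X μ) 0 = iteratedDeriv n (complexMGF Y ν) 0 := by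
    intro n
    rw [iteratedDeriv_complexMGF (by simpa using hX), iteratedDeriv_complexMGF (by simpa using hY)]
    simp only [zero_mul, Complex.exp_zero, mul_one, ← Complex.ofReal_pow,
      integral_complex_ofReal, h]
  have hseriesX := (analyticAt_complexMGF (z := 0) (by simpa using hX)).hasFPowerSeriesAt
  have hseriesY := (analyticAt_complexMGF (z := 0) (by simpa using hY)).hasFPowerSeriesAt
  simp only [hderiv] at hseriesX
  have hsub := (hseriesX.sub hseriesY).locally_zero_iff.mpr (sub_self _)
  exact hsub.mono fun _ => sub_eq_zero.mp

theorem map_eq_map_of_forall_integral_pow_eq [IsFiniteMeasure μ] [IsFiniteMeasure ν]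
    (hX : AEMeasurable X μ) (hY : AEMeasurable Y ν)
    (hX₀ : 0 ∈ interior (integrableExpSet X μ)) (hY₀ : 0 ∈ interior (integrableExpSet Y ν))
    (h : ∀ n : ℕ, ∫ ω, X ω ^ n ∂μ = ∫ ω, Y ω ^ n ∂ν) :
    μ.map X = ν.map Y := by
  -- Both transforms are analytic on this connected strip, which contains the imaginary axis.
  let strip : Set ℂ :=
    {z | z.re ∈ interior (integrableExpSet X μ) ∩ interior (integrableExpSet Y ν)}
  have hstrip : IsPreconnected strip :=
    ((convex_integrableExpSet.interior.inter convex_integrableExpSet.interior).linear_preimage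
      Complex.reLm).isPreconnected
  have hEq : EqOn (complexMGF X μ) (complexMGF Y ν) strip :=
    AnalyticOnNhd.eqOn_of_preconnected_of_eventuallyEq
      (fun _ hz => analyticAt_complexMGF hz.1) (fun _ hz => analyticAt_complexMGF hz.2) hstrip
      (show (0 : ℂ) ∈ strip by simpa [strip] using ⟨hX₀, hY₀⟩)
      (complexMGF_eventuallyEq_of_forall_integral_pow_eq hX₀ hY₀ h)
  refine Measure.ext_of_charFun (funext fun t => ?_)
  rw [← complexMGF_mul_I hX, ← complexMGF_mul_I hY]
  exact hEq (by simpa [strip] using ⟨hX₀, hY₀⟩)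

theorem setIntegral_preimage_eq_zero_of_forall_integral_mul_pow_eq_zero {f : Ω → ℝ}
    (hf : Integrable f μ) (hX : Measurable X) (hM : ∀ᵐ ω ∂μ, |X ω| ≤ M)
    (h : ∀ n : ℕ, ∫ ω, f ω * X ω ^ n ∂μ = 0) {D : Set ℝ} (hD : MeasurableSet D) :
    ∫ ω in X ⁻¹' D, f ω ∂μ = 0 := by
  -- The laws of `X` under `f⁺ μ` and `f⁻ μ` have the same moments.
  let μpos := μ.withDensity fun ω => ENNReal.ofReal (f ω)
  let μneg := μ.withDensity fun ω => ENNReal.ofReal (-f ω)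
  have : IsFiniteMeasure μpos := isFiniteMeasure_withDensity_ofReal hf.2
  have : IsFiniteMeasure μneg := isFiniteMeasure_withDensity_ofReal hf.neg.2
  have hsub : ∀ n, ∫ ω, X ω ^ n ∂μpos - ∫ ω, X ω ^ n ∂μneg = ∫ ω, f ω * X ω ^ n ∂μ := by
    intro n
    have hint : ∀ {g : Ω → ℝ}, Integrable g μ → Integrable (fun ω => g ω * X ω ^ n) μ :=
      fun hg => hg.mul_bdd (c := M ^ n) (by fun_prop) (hM.mono fun ω hω => by
        simpa using pow_le_pow_left₀ (abs_nonneg _) hω n)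
    have hneg : AEMeasurable (fun ω => ENNReal.ofReal (-f ω)) μ :=
      hf.aemeasurable.neg.ennreal_ofReal
    rw [integral_withDensity_eq_integral_toReal_smul₀ hf.aemeasurable.ennreal_ofReal (by simp),
      integral_withDensity_eq_integral_toReal_smul₀ hneg (by simp)]
    simp only [ENNReal.toReal_ofReal', smul_eq_mul]
    rw [← integral_sub (hint hf.pos_part) (hint hf.neg_part)]
    simp only [← sub_mul, max_zero_sub_eq_self]
  have hmap : μpos.map X = μneg.map X := by
    refine map_eq_map_of_forall_integral_pow_eq hX.aemeasurable hX.aemeasurable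
      (zero_mem_interior_integrableExpSet_of_ae_bound hX.aemeasurable
        ((withDensity_absolutelyContinuous _ _).ae_le hM))
      (zero_mem_interior_integrableExpSet_of_ae_bound hX.aemeasurable
        ((withDensity_absolutelyContinuous _ _).ae_le hM))
      fun n => sub_eq_zero.mp ((hsub n).trans (h n))
  have hDeq : μpos (X ⁻¹' D) = μneg (X ⁻¹' D) := by
    rw [← Measure.map_apply hX hD, hmap, Measure.map_apply hX hD]
  rw [withDensity_apply _ (hX hD), withDensity_apply _ (hX hD)] at hDeq
  rw [integral_eq_lintegral_pos_part_sub_lintegral_neg_part hf.integrableOn, hDeq, sub_self]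

theorem condExp_comap_ae_eq_self_of_forall_integral_mul_pow_eq [IsFiniteMeasure μ] {f : Ω → ℝ}
    (hf : Integrable f μ) (hX : Measurable X) (hM : ∀ᵐ ω ∂μ, |X ω| ≤ M)
    (h : ∀ n : ℕ, ∫ ω, f ω * X ω ^ n ∂μ = ∫ ω, X ω ^ (n + 1) ∂μ) :
    μ[f | MeasurableSpace.comap X inferInstance] =ᵐ[μ] X := by
  have hpow : ∀ n : ℕ, Integrable (fun ω => X ω ^ n) μ := fun n =>
    integrable_pow_of_mem_interior_integrableExpSet
      (zero_mem_interior_integrableExpSet_of_ae_bound hX.aemeasurable hM) n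
  have hXint : Integrable X μ := by simpa using hpow 1
  have hbdd : ∀ n : ℕ, ∀ᵐ ω ∂μ, ‖X ω ^ n‖ ≤ M ^ n := fun n => hM.mono fun ω hω => by
    simpa using pow_le_pow_left₀ (abs_nonneg _) hω n
  have horth : ∀ n : ℕ, ∫ ω, (X ω - f ω) * X ω ^ n ∂μ = 0 := by
    intro n
    simp only [sub_mul, ← pow_succ']
    rw [integral_sub (hpow _) (hf.mul_bdd (by fun_prop) (hbdd n)), h, sub_self]
  refine (ae_eq_condExp_of_forall_setIntegral_eq hX.comap_le hf
    (fun _ _ _ => hXint.integrableOn) ?_ (comap_measurable X).aestronglyMeasurable).symm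
  rintro _ ⟨D, hD, rfl⟩ -
  have hzero := setIntegral_preimage_eq_zero_of_forall_integral_mul_pow_eq_zero
    (hXint.sub hf) hX hM horth hD
  simp only [Pi.sub_apply] at hzero
  rwa [integral_sub hXint.integrableOn hf.integrableOn, sub_eq_zero] at hzero

end Moments

section IntegralOfProcess

variable {Ω Ω' T : Type*} [MeasurableSpace Ω] [MeasurableSpace Ω'] [MeasurableSpace T]
  {P : Measure Ω} [IsFiniteMeasure P] {Q : Measure Ω'} [IsFiniteMeasure Q]
  {τ : Measure T} [IsFiniteMeasure τ] {M : ℝ}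

theorem integral_pow_integral_eq_integral_integral_prod {Z : T → Ω → ℝ}
    (hZ : Measurable fun p : T × Ω => Z p.1 p.2) (hM : ∀ t ω, |Z t ω| ≤ M) (n : ℕ) :
    ∫ ω, (∫ t, Z t ω ∂τ) ^ n ∂P
      = ∫ u : Fin n → T, ∫ ω, ∏ i, Z (u i) ω ∂P ∂Measure.pi fun _ => τ := by
  have hprod : Integrable (Function.uncurry fun (u : Fin n → T) ω => ∏ i, Z (u i) ω)
      ((Measure.pi fun _ => τ).prod P) := by
    refine .of_bound (C := M ^ n) ?_ (.of_forall fun p => ?_)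
    · exact (Finset.measurable_prod _ fun i _ =>
        hZ.comp (f := fun p : (Fin n → T) × Ω => (p.1 i, p.2)) (by fun_prop)).aestronglyMeasurable
    · calc ‖∏ i, Z (p.1 i) p.2‖ = ∏ i, |Z (p.1 i) p.2| := Finset.abs_prod _ _
        _ ≤ ∏ _i : Fin n, M := Finset.prod_le_prod (fun _ _ => abs_nonneg _) fun _ _ => hM _ _
        _ = M ^ n := by simp
  rw [integral_integral_swap hprod]
  refine integral_congr_ae (.of_forall fun ω => ?_)
  simpa using (integral_fintype_prod_eq_pow (ι := Fin n) (μ := τ) fun t => Z t ω).symm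

theorem measurable_integral_of_measurable_uncurry {E : Type*} [NormedAddCommGroup E]
    [NormedSpace ℝ E] [MeasurableSpace E] [BorelSpace E] [SecondCountableTopology E]
    {Z : T → Ω → E} (hZ : Measurable fun p : T × Ω => Z p.1 p.2) :
    Measurable fun ω => ∫ t, Z t ω ∂τ :=
  (hZ.stronglyMeasurable.integral_prod_left').measurable

theorem identDistrib_integral_of_bound_real {Z : T → Ω → ℝ} {W : T → Ω' → ℝ}
    (hZ : Measurable fun p : T × Ω => Z p.1 p.2) (hW : Measurable fun p : T × Ω' => W p.1 p.2)
    (hZM : ∀ t ω, |Z t ω| ≤ M) (hWM : ∀ t ω, |W t ω| ≤ M)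
    (h : IdentDistrib (fun ω t => Z t ω) (fun ω t => W t ω) P Q) :
    IdentDistrib (fun ω => ∫ t, Z t ω ∂τ) (fun ω => ∫ t, W t ω ∂τ) P Q := by
  have hZi := measurable_integral_of_measurable_uncurry (τ := τ) hZ
  have hWi := measurable_integral_of_measurable_uncurry (τ := τ) hW
  have hZb : ∀ ω, ‖∫ t, Z t ω ∂τ‖ ≤ M * τ.real univ := fun ω =>
    norm_integral_le_of_norm_le_const (.of_forall fun t => hZM t ω)
  have hWb : ∀ ω, ‖∫ t, W t ω ∂τ‖ ≤ M * τ.real univ := fun ω =>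
    norm_integral_le_of_norm_le_const (.of_forall fun t => hWM t ω)
  refine ⟨hZi.aemeasurable, hWi.aemeasurable, map_eq_map_of_forall_integral_pow_eq
    hZi.aemeasurable hWi.aemeasurable
    (zero_mem_interior_integrableExpSet_of_ae_bound hZi.aemeasurable (.of_forall hZb))
    (zero_mem_interior_integrableExpSet_of_ae_bound hWi.aemeasurable (.of_forall hWb))
    fun n => ?_⟩
  rw [integral_pow_integral_eq_integral_integral_prod hZ hZM,
    integral_pow_integral_eq_integral_integral_prod hW hWM]
  refine integral_congr_ae (.of_forall fun u => ?_)
  exact (h.comp (u := fun x => ∏ i, x (u i)) (by fun_prop)).integral_eq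

theorem ext_of_forall_map_strongDual_eq {E : Type*} [NormedAddCommGroup E] [NormedSpace ℝ E]
    [CompleteSpace E] [SecondCountableTopology E] [MeasurableSpace E] [BorelSpace E]
    {μ ν : Measure E} [IsFiniteMeasure μ] [IsFiniteMeasure ν]
    (h : ∀ L : StrongDual ℝ E, μ.map L = ν.map L) : μ = ν :=
  Measure.ext_of_charFunDual <| funext fun L => by
    rw [charFunDual_eq_charFun_map_one, charFunDual_eq_charFun_map_one, h]

theorem identDistrib_integral_of_bound {E : Type*} [NormedAddCommGroup E] [NormedSpace ℝ E]
    [CompleteSpace E] [SecondCountableTopology E] [MeasurableSpace E] [BorelSpace E]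
    {Z : T → Ω → E} {W : T → Ω' → E}
    (hZ : Measurable fun p : T × Ω => Z p.1 p.2) (hW : Measurable fun p : T × Ω' => W p.1 p.2)
    (hZM : ∀ t ω, ‖Z t ω‖ ≤ M) (hWM : ∀ t ω, ‖W t ω‖ ≤ M)
    (h : IdentDistrib (fun ω t => Z t ω) (fun ω t => W t ω) P Q) :
    IdentDistrib (fun ω => ∫ t, Z t ω ∂τ) (fun ω => ∫ t, W t ω ∂τ) P Q := by
  have hZi := measurable_integral_of_measurable_uncurry (τ := τ) hZ
  have hWi := measurable_integral_of_measurable_uncurry (τ := τ) hW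
  refine ⟨hZi.aemeasurable, hWi.aemeasurable, ext_of_forall_map_strongDual_eq fun L => ?_⟩
  have hLZ : ∀ ω, L (∫ t, Z t ω ∂τ) = ∫ t, L (Z t ω) ∂τ := fun ω =>
    (L.integral_comp_comm (.of_bound (hZ.of_uncurry_right (y := ω)).aestronglyMeasurable M
      (.of_forall fun t => hZM t ω))).symm
  have hLW : ∀ ω, L (∫ t, W t ω ∂τ) = ∫ t, L (W t ω) ∂τ := fun ω =>
    (L.integral_comp_comm (.of_bound (hW.of_uncurry_right (y := ω)).aestronglyMeasurable M
      (.of_forall fun t => hWM t ω))).symm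
  have hreal := identDistrib_integral_of_bound_real (τ := τ) (M := ‖L‖ * M)
    (L.measurable.comp hZ) (L.measurable.comp hW)
    (fun t ω => L.le_opNorm_of_le (hZM t ω)) (fun t ω => L.le_opNorm_of_le (hWM t ω))
    (h.comp (u := fun x t => L (x t)) (by fun_prop))
  rw [Measure.map_map L.measurable hZi, Measure.map_map L.measurable hWi]
  simpa only [Function.comp_def, hLZ, hLW] using hreal.map_eq

end IntegralOfProcess

section SelfSimilar

theorem identDistrib_of_forall_fin_map_eq {Ω T F : Type*} [MeasurableSpace Ω] [MeasurableSpace F]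
    {P : Measure Ω} [IsFiniteMeasure P] {Y Z : T → Ω → F}
    (hY : ∀ t, Measurable (Y t)) (hZ : ∀ t, Measurable (Z t))
    (h : ∀ (n : ℕ) (t : Fin n → T),
      P.map (fun ω i => Y (t i) ω) = P.map (fun ω i => Z (t i) ω)) :
    IdentDistrib (fun ω t => Y t ω) (fun ω t => Z t ω) P P := by
  have hYm : AEMeasurable (fun ω t => Y t ω) P := (measurable_pi_lambda _ hY).aemeasurable
  have hZm : AEMeasurable (fun ω t => Z t ω) P := (measurable_pi_lambda _ hZ).aemeasurable
  refine ⟨hYm, hZm, (map_eq_iff_forall_finset_map_restrict_eq hYm hZm).mpr fun J => ?_⟩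
  have htuple : IdentDistrib (fun ω i => Y (J.equivFin.symm i) ω)
      (fun ω i => Z (J.equivFin.symm i) ω) P P :=
    ⟨(measurable_pi_lambda _ fun _ => hY _).aemeasurable,
      (measurable_pi_lambda _ fun _ => hZ _).aemeasurable, h _ _⟩
  have hreindex := (htuple.comp (u := fun x (t : J) => x (J.equivFin t)) (by fun_prop)).map_eq
  simpa only [Function.comp_def, Equiv.symm_apply_apply, Finset.restrict_def] using hreindex

variable {Ω E F : Type*} [MeasurableSpace Ω] {P : Measure Ω}
  [MeasurableSpace E] [SMul ℝ E] [MeasurableSpace F] [SMul ℝ F] {β α : ℝ}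

/-- A process `Y` is `β`-self-similar if for every `c > 0` the processes `t ↦ Y (c * t)` and
`t ↦ c ^ β • Y t` have the same law. Only times in `ℝ≥0` are considered, and the law is taken on the
path space with its product `σ`-algebra, where it is determined by the finite-dimensional
distributions. -/
def IsSelfSimilar (β : ℝ) (Y : ℝ → Ω → E) (P : Measure Ω) : Prop :=
  ∀ c : ℝ, 0 < c →
    IdentDistrib (fun ω (t : ℝ≥0) => Y (c * t) ω) (fun ω (t : ℝ≥0) => c ^ β • Y t ω) P P

theorem isSelfSimilar_of_forall_fin_map_eq [IsFiniteMeasure P] [MeasurableConstSMul ℝ E]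
    {Y : ℝ → Ω → E} (hY : ∀ t, Measurable (Y t))
    (h : ∀ c : ℝ, 0 < c → ∀ (n : ℕ) (t : Fin n → ℝ), (∀ i, 0 ≤ t i) →
      P.map (fun ω i => Y (c * t i) ω) = P.map (fun ω i => c ^ β • Y (t i) ω)) :
    IsSelfSimilar β Y P := fun c hc =>
  identDistrib_of_forall_fin_map_eq (fun _ => hY _) (fun _ => (hY _).const_smul _)
    fun n t => h c hc n (fun i => t i) fun i => (t i).2

theorem IsSelfSimilar.comp_of_homogeneous {Y : ℝ → Ω → E} (hY : IsSelfSimilar β Y P) {f : E → F}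
    (hf : Measurable f) (hhom : ∀ l : ℝ, 0 < l → ∀ x, f (l • x) = l ^ α • f x) :
    IsSelfSimilar (β * α) (fun t ω => f (Y t ω)) P := by
  intro c hc
  have hcomp := (hY c hc).comp (u := fun x t => f (x t)) (by fun_prop)
  simpa only [Function.comp_def, hhom _ (Real.rpow_pos_of_pos hc β), Real.rpow_mul hc.le]
    using hcomp

theorem IsSelfSimilar.indicator_of_cone {Y : ℝ → Ω → E} (hY : IsSelfSimilar β Y P) {C : Set E}
    (hC : MeasurableSet C) (hcone : ∀ l : ℝ, 0 < l → ∀ x, x ∈ C ↔ l • x ∈ C) :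
    IsSelfSimilar 0 (fun t ω => C.indicator (fun _ => (1 : ℝ)) (Y t ω)) P := by
  have hhom : ∀ l : ℝ, 0 < l → ∀ x,
      C.indicator (fun _ => (1 : ℝ)) (l • x) = l ^ (0 : ℝ) • C.indicator (fun _ => 1) x :=
    fun l hl x => by by_cases hx : x ∈ C <;> simp [hx, ← hcone l hl x]
  simpa only [mul_zero] using hY.comp_of_homogeneous (measurable_const.indicator hC) hhom

end SelfSimilar

section TimeAverage

variable {Ω : Type*} {X : ℝ → Ω → ℝ} {M : ℝ}

/-- The time average `t⁻¹ ∫₀ᵗ X_s ds` of a real-valued process; it is `0` at `t = 0`. -/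
noncomputable def timeAverage (X : ℝ → Ω → ℝ) (t : ℝ) (ω : Ω) : ℝ :=
  t⁻¹ * ∫ s in (0 : ℝ)..t, X s ω

theorem intervalIntegral_eq_smul_integral_unitInterval {E : Type*} [NormedAddCommGroup E]
    [NormedSpace ℝ E] (f : ℝ → E) (t : ℝ) :
    ∫ s in (0 : ℝ)..t, f s = t • ∫ v : I, f (t * v) := by
  rw [integral_subtype measurableSet_Icc fun v => f (t * v), integral_Icc_eq_integral_Ioc,
    ← intervalIntegral.integral_of_le zero_le_one, intervalIntegral.smul_integral_comp_mul_left,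
    mul_zero, mul_one]

theorem timeAverage_eq_integral_unitInterval {t : ℝ} (ht : t ≠ 0) (ω : Ω) :
    timeAverage X t ω = ∫ v : I, X (t * v) ω := by
  rw [timeAverage, intervalIntegral_eq_smul_integral_unitInterval, smul_eq_mul,
    inv_mul_cancel_left₀ ht]

theorem intervalIntegral_eq_mul_timeAverage (t : ℝ) (ω : Ω) :
    ∫ s in (0 : ℝ)..t, X s ω = t * timeAverage X t ω := by
  rcases eq_or_ne t 0 with rfl | ht
  · simp
  · rw [timeAverage, mul_inv_cancel_left₀ ht]

theorem abs_timeAverage_le (hM : ∀ t ω, |X t ω| ≤ M) (t : ℝ) (ω : Ω) :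
    |timeAverage X t ω| ≤ M := by
  rcases eq_or_ne t 0 with rfl | ht
  · simpa [timeAverage] using (abs_nonneg _).trans (hM 0 ω)
  · rw [timeAverage_eq_integral_unitInterval ht]
    have hbound : ‖∫ v : I, X (t * v) ω‖ ≤ M * (volume : Measure I).real univ :=
      norm_integral_le_of_norm_le_const (.of_forall fun v => hM (t * v) ω)
    simpa using hbound

theorem measurable_timeAverage [MeasurableSpace Ω]
    (hX : Measurable fun p : ℝ × Ω => X p.1 p.2) :
    Measurable fun p : ℝ × Ω => timeAverage X p.1 p.2 := by
  have hZ : Measurable fun q : I × (ℝ × Ω) => X (q.2.1 * q.1) q.2.2 :=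
    hX.comp (f := fun q : I × (ℝ × Ω) => (q.2.1 * (q.1 : ℝ), q.2.2)) (by fun_prop)
  simp only [timeAverage, intervalIntegral_eq_smul_integral_unitInterval, smul_eq_mul]
  exact measurable_fst.inv.mul
    (measurable_fst.mul (measurable_integral_of_measurable_uncurry hZ))

theorem IsSelfSimilar.identDistrib_prodMk_timeAverage [MeasurableSpace Ω] {P : Measure Ω}
    [IsFiniteMeasure P] (h : IsSelfSimilar 0 X P) (hX : Measurable fun p : ℝ × Ω => X p.1 p.2)
    (hM : ∀ t ω, |X t ω| ≤ M) {t : ℝ} (ht : 0 < t) :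
    IdentDistrib (fun ω => (X t ω, timeAverage X t ω))
      (fun ω => (X 1 ω, timeAverage X 1 ω)) P P := by
  have hint : ∀ {r : ℝ}, r ≠ 0 → ∀ ω,
      (X r ω, timeAverage X r ω) = ∫ v : I, (X r ω, X (r * v) ω) := by
    intro r hr ω
    have hpath : Measurable fun v : I => X (r * v) ω :=
      hX.comp (f := fun v : I => (r * (v : ℝ), ω)) (by fun_prop)
    rw [integral_pair (integrable_const _)
      (.of_bound hpath.aestronglyMeasurable M (.of_forall fun v => hM _ _)),
      ← timeAverage_eq_integral_unitInterval hr]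
    simp
  have hmeas : ∀ r : ℝ, Measurable fun q : I × Ω => (X r q.2, X (r * q.1) q.2) := fun r =>
    (hX.comp (f := fun q : I × Ω => (r, q.2)) (by fun_prop)).prodMk
      (hX.comp (f := fun q : I × Ω => (r * (q.1 : ℝ), q.2)) (by fun_prop))
  have hbound : ∀ r (v : I) ω, ‖(X r ω, X (r * v) ω)‖ ≤ M := fun r v ω =>
    max_le (hM _ _) (hM _ _)
  simp only [hint ht.ne', hint one_ne_zero]
  refine identDistrib_integral_of_bound (hmeas t) (hmeas 1) (hbound t) (hbound 1) ?_
  have hpath := (h t ht).comp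
    (u := fun x (v : I) => (x 1, x (unitInterval.toNNReal v))) (by fun_prop)
  simpa [Function.comp_def] using hpath

end TimeAverage

section MomentIdentity

theorem integral_mul_integral_pow {f : ℝ → ℝ} {a b : ℝ} (hf : IntervalIntegrable f volume a b)
    (n : ℕ) :
    ∫ t in a..b, f t * (∫ s in a..t, f s) ^ n = (∫ s in a..b, f s) ^ (n + 1) / (n + 1) := by
  have hac := hf.absolutelyContinuousOnInterval_intervalIntegral left_mem_uIcc
  have hpow : AbsolutelyContinuousOnInterval (fun t => (∫ s in a..t, f s) ^ (n + 1)) a b := by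
    induction n with
    | zero => simpa using hac
    | succ n ih => simpa only [pow_succ _ (n + 1)] using ih.fun_mul hac
  have hderiv : ∀ᵐ t, t ∈ uIoc a b →
      deriv (fun t => (∫ s in a..t, f s) ^ (n + 1)) t
        = (n + 1) * (f t * (∫ s in a..t, f s) ^ n) := by
    filter_upwards [hf.ae_hasDerivAt_integral] with t ht htab
    have hd := ((ht (uIoc_subset_uIcc htab) a left_mem_uIcc).fun_pow (n + 1)).deriv
    rw [hd, Nat.add_sub_cancel]
    push_cast
    ring
  have hftc := hpow.integral_deriv_eq_sub
  rw [intervalIntegral.integral_congr_ae hderiv, intervalIntegral.integral_const_mul,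
    intervalIntegral.integral_same, zero_pow n.succ_ne_zero, sub_zero] at hftc
  rw [← hftc, mul_div_cancel_left₀ _ n.cast_add_one_ne_zero]

variable {Ω : Type*} [MeasurableSpace Ω] {P : Measure Ω} [IsFiniteMeasure P]
  {X : ℝ → Ω → ℝ} {M : ℝ}

theorem integral_timeAverage_one_pow_succ (hX : Measurable fun p : ℝ × Ω => X p.1 p.2)
    (hM : ∀ t ω, |X t ω| ≤ M) (n : ℕ) :
    ∫ ω, timeAverage X 1 ω ^ (n + 1) ∂P
      = (n + 1) * ∫ t in (0 : ℝ)..1, t ^ n * ∫ ω, X t ω * timeAverage X t ω ^ n ∂P := by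
  have hpath : ∀ ω, timeAverage X 1 ω ^ (n + 1)
      = (n + 1) * ∫ t in (0 : ℝ)..1, t ^ n * (X t ω * timeAverage X t ω ^ n) := by
    intro ω
    have hint : IntervalIntegrable (fun t => X t ω) volume 0 1 :=
      (intervalIntegrable_const (c := M)).mono_fun'
        (hX.of_uncurry_right (y := ω)).aestronglyMeasurable (.of_forall fun t => hM t ω)
    have h := integral_mul_integral_pow hint n
    simp only [intervalIntegral_eq_mul_timeAverage, one_mul, mul_pow, mul_left_comm (X _ ω)] at h
    rw [h, mul_div_cancel₀ _ n.cast_add_one_ne_zero]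
  have hprod : Integrable
      (Function.uncurry fun t ω => t ^ n * (X t ω * timeAverage X t ω ^ n))
      ((volume.restrict (uIoc (0 : ℝ) 1)).prod P) := by
    have hpow : Integrable (fun t : ℝ => t ^ n) (volume.restrict (uIoc 0 1)) :=
      (continuous_pow n).integrableOn_uIoc
    refine (hpow.comp_fst P).mul_bdd (c := M * M ^ n) ?_ (.of_forall fun p => ?_)
    · exact (hX.mul ((measurable_timeAverage hX).pow_const n)).aestronglyMeasurable
    · rw [norm_mul, norm_pow]
      exact mul_le_mul (hM _ _) (pow_le_pow_left₀ (norm_nonneg _) (abs_timeAverage_le hM _ _) n)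
        (by positivity) ((abs_nonneg _).trans (hM p.1 p.2))
  simp only [hpath, integral_const_mul]
  rw [← intervalIntegral_integral_swap hprod]
  simp only [integral_const_mul]

theorem IsSelfSimilar.integral_mul_timeAverage_pow (h : IsSelfSimilar 0 X P)
    (hX : Measurable fun p : ℝ × Ω => X p.1 p.2) (hM : ∀ t ω, |X t ω| ≤ M) (n : ℕ) :
    ∫ ω, X 1 ω * timeAverage X 1 ω ^ n ∂P = ∫ ω, timeAverage X 1 ω ^ (n + 1) ∂P := by
  have hscale : ∀ t ∈ Ioc (0 : ℝ) 1, ∫ ω, X t ω * timeAverage X t ω ^ n ∂P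
      = ∫ ω, X 1 ω * timeAverage X 1 ω ^ n ∂P := fun t ht =>
    ((h.identDistrib_prodMk_timeAverage hX hM ht.1).comp
      (u := fun p : ℝ × ℝ => p.1 * p.2 ^ n) (by fun_prop)).integral_eq
  have hconst : ∫ t in (0 : ℝ)..1, t ^ n * ∫ ω, X t ω * timeAverage X t ω ^ n ∂P
      = ∫ t in (0 : ℝ)..1, t ^ n * ∫ ω, X 1 ω * timeAverage X 1 ω ^ n ∂P :=
    intervalIntegral.integral_congr_ae <| .of_forall fun t ht => by
      rw [hscale t (uIoc_of_le (zero_le_one' ℝ) ▸ ht)]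
  rw [integral_timeAverage_one_pow_succ hX hM, hconst, intervalIntegral.integral_mul_const,
    integral_pow]
  have := n.cast_add_one_ne_zero (R := ℝ)
  field_simp
  simp

end MomentIdentity

theorem statement2_general {Ω : Type*} [MeasurableSpace Ω] {P : Measure Ω} [IsFiniteMeasure P]
    {X : ℝ → Ω → ℝ} {M : ℝ} (hX : Measurable fun p : ℝ × Ω => X p.1 p.2)
    (hM : ∀ t ω, |X t ω| ≤ M) (hss : IsSelfSimilar 0 X P) :
    (∀ t : ℝ, 0 < t →
      P.map (fun ω => (X t ω, timeAverage X t ω)) = P.map (fun ω => (X 1 ω, timeAverage X 1 ω))) ∧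
    P[X 1 | MeasurableSpace.comap (timeAverage X 1) inferInstance] =ᵐ[P] timeAverage X 1 := by
  have hX₁ : Measurable (X 1) := hX.of_uncurry_left
  have hA₁ : Measurable (timeAverage X 1) := (measurable_timeAverage hX).of_uncurry_left
  refine ⟨fun t ht => (hss.identDistrib_prodMk_timeAverage hX hM ht).map_eq, ?_⟩
  exact condExp_comap_ae_eq_self_of_forall_integral_mul_pow_eq
    (.of_bound hX₁.aestronglyMeasurable M (.of_forall (hM 1))) hA₁
    (.of_forall (abs_timeAverage_le hM 1)) (hss.integral_mul_timeAverage_pow hX hM)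

/-- Let `Y` be a jointly measurable `β`-self-similar process with values
in `ℝ^d` and let `C` be a Borel cone.  With `X_t := 1_{Y_t ∈ C}` and
`X̄_t := t⁻¹ ∫₀ᵗ X_s ds`, for every `t > 0` the pair `(X_t, X̄_t)` has the same law as
`(X_1, X̄_1)`, and consequently `P(Y_1 ∈ C | σ(X̄_1)) = X̄_1` a.s. -/
theorem statement2
    {Ω : Type*} [MeasurableSpace Ω] (P : Measure Ω) [IsProbabilityMeasure P]
    {d : ℕ} (Y : ℝ → Ω → (Fin d → ℝ))
    (hY : Measurable fun p : ℝ × Ω => Y p.1 p.2)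
    (β : ℝ)
    (hss : ∀ c : ℝ, 0 < c → ∀ (n : ℕ) (t : Fin n → ℝ), (∀ i, 0 ≤ t i) →
      Measure.map (fun ω (i : Fin n) => Y (c * t i) ω) P
        = Measure.map (fun ω (i : Fin n) => (c ^ β) • Y (t i) ω) P)
    (C : Set (Fin d → ℝ)) (hC : MeasurableSet C)
    (hcone : ∀ (l : ℝ), 0 < l → ∀ x : Fin d → ℝ, x ∈ C ↔ l • x ∈ C)
    (X : ℝ → Ω → ℝ)
    (hXdef : ∀ t ω, X t ω = Set.indicator C (fun _ => (1:ℝ)) (Y t ω))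
    (Xbar : ℝ → Ω → ℝ)
    (hXbar : ∀ t ω, Xbar t ω = t⁻¹ * ∫ s in (0:ℝ)..t, X s ω) :
    (∀ t : ℝ, 0 < t →
        Measure.map (fun ω => (X t ω, Xbar t ω)) P
          = Measure.map (fun ω => (X 1 ω, Xbar 1 ω)) P) ∧
      P[Set.indicator {ω | Y 1 ω ∈ C} (fun _ => (1:ℝ))
          | MeasurableSpace.comap (Xbar 1) inferInstance]
        =ᵐ[P] Xbar 1 := by
  obtain rfl : X = fun t ω => C.indicator (fun _ => (1 : ℝ)) (Y t ω) :=
    funext fun t => funext (hXdef t)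
  obtain rfl : Xbar = timeAverage fun t ω => C.indicator (fun _ => (1 : ℝ)) (Y t ω) :=
    funext fun t => funext (hXbar t)
  have hYt : ∀ t, Measurable (Y t) := fun _ => hY.of_uncurry_left
  have hX01 : ∀ t ω, |C.indicator (fun _ => (1 : ℝ)) (Y t ω)| ≤ 1 := fun t ω => by
    by_cases hω : Y t ω ∈ C <;> simp [hω]
  exact statement2_general ((measurable_const.indicator hC).comp hY) hX01
    ((isSelfSimilar_of_forall_fin_map_eq hYt hss).indicator_of_cone hC hcone)
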